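/- Let G=(V,E,I,{s,t}) be a grapht with terminal set {s,t}. Suppose s is linked and every system of pairwise edge-disjoint st-paths covering δ_G(s) uses the edge e∈E∖δ_G(s). Let C be an Erdős-Menger st-cut containing e that satisfies C ⊴ C' for every Erdős-Menger st-cut C' containing e. Then C is tight: every linkage of s is orthogonal to C. -/

import Mathlib

/-! Common definitions: graphts (multigraphs with terminals), walks, paths, cycles,
edge cuts, inner Eulerian graphts, path systems, linkages, Erdős–Menger cuts,
restriction (edge deletion) and contraction. -/

universe u v

/-- A *grapht*: a multigraph (no loops, parallel edges allowed) given by an incidence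
function `I : E → Sym2 V`, together with a set `T` of at least two terminal vertices. -/
structure Grapht (V : Type u) (E : Type v) where
  I : E → Sym2 V
  loopless : ∀ e : E, ¬ (I e).IsDiag
  T : Set V
  T_nontrivial : T.Nontrivial

namespace Grapht

variable {V : Type u} {E : Type v}

/-- `G.IsWalk vs es` holds when `vs` is the vertex sequence and `es` the edge sequence
of a walk in `G`. -/
inductive IsWalk (G : Grapht V E) : List V → List E → Prop
  | nil (v : V) : IsWalk G [v] []
  | cons {u w : V} {vs : List V} {e : E} {es : List E} :
      G.I e = s(u, w) → IsWalk G (w :: vs) es → IsWalk G (u :: w :: vs) (e :: es)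

/-- A finite path in the grapht `G` (no repeated vertices), with endpoints `first`, `last`. -/
structure Path (G : Grapht V E) where
  first : V
  last : V
  verts : List V
  edges : List E
  isWalk : G.IsWalk verts edges
  nodup : verts.Nodup
  head_eq : verts.head? = some first
  getLast_eq : verts.getLast? = some last

/-- A finite cycle in the grapht `G`. -/
structure Cycle (G : Grapht V E) where
  verts : List V
  edges : List E
  isWalk : G.IsWalk verts edges
  closed : verts.head? = verts.getLast?
  nontrivial : edges ≠ []
  edges_nodup : edges.Nodup
  tail_nodup : verts.tail.Nodup

variable {G : Grapht V E}

/-- The internal (inner) vertices of a path. -/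
def Path.inner (P : G.Path) : List V := (P.verts.drop 1).dropLast

/-- The edge set of a path. -/
def Path.edgeSet (P : G.Path) : Set E := {e | e ∈ P.edges}

/-- The edge set of a cycle. -/
def Cycle.edgeSet (C : G.Cycle) : Set E := {e | e ∈ C.edges}

variable (G)

/-- `δ_G(X)`: the set of edges with exactly one endpoint in `X`. -/
def edgeCut (X : Set V) : Set E :=
  {e | ∃ u w, G.I e = s(u, w) ∧ u ∈ X ∧ w ∉ X}

/-- A grapht is *inner Eulerian* if there is no `X ⊆ V ∖ T` whose cut `δ(X)` is a
finite set of odd size. -/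
def InnerEulerian : Prop :=
  ∀ X : Set V, Disjoint X G.T → ¬ ((G.edgeCut X).Finite ∧ Odd (G.edgeCut X).ncard)

/-- An `AB`-path: a path with first vertex in `A`, last vertex in `B` and no internal
vertex in `A ∪ B`. -/
def IsABPath (A B : Set V) (P : G.Path) : Prop :=
  P.first ∈ A ∧ P.last ∈ B ∧ ∀ v ∈ P.inner, v ∉ A ∪ B

/-- A `T`-path: a path between two distinct terminal vertices without internal
terminal vertices. -/
def IsTPath (P : G.Path) : Prop :=
  P.first ∈ G.T ∧ P.last ∈ G.T ∧ P.first ≠ P.last ∧ ∀ v ∈ P.inner, v ∉ G.T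

/-- A system of pairwise edge-disjoint paths. -/
def EdgeDisjoint (Ps : Set G.Path) : Prop :=
  Ps.Pairwise fun P Q => ∀ e, e ∈ P.edges → e ∉ Q.edges

/-- A system of pairwise edge-disjoint `T`-paths. -/
def IsTPathSystem (Ps : Set G.Path) : Prop :=
  G.EdgeDisjoint Ps ∧ ∀ P ∈ Ps, G.IsTPath P

/-- The set of edges used by a path system. -/
def sysEdges (Ps : Set G.Path) : Set E := ⋃ P ∈ Ps, P.edgeSet

/-- `C` is *orthogonal* to the path system `Ps`: `C` consists of exactly one edge from
each path of `Ps`. -/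
def Orthogonal (C : Set E) (Ps : Set G.Path) : Prop :=
  (∀ P ∈ Ps, ∃! e, e ∈ C ∧ e ∈ P.edges) ∧ ∀ e ∈ C, ∃ P ∈ Ps, e ∈ P.edges

/-- `C` separates `A` and `B`: every `AB`-path meets `C` (i.e. `G − C` has no `AB`-path). -/
def Separates (C : Set E) (A B : Set V) : Prop :=
  ∀ P : G.Path, G.IsABPath A B P → ∃ e ∈ C, e ∈ P.edges

/-- An `AB`-cut. -/
def IsABCut (A B : Set V) (C : Set E) : Prop :=
  ∀ P : G.Path, G.IsABPath A B P → ∃ e ∈ C, e ∈ P.edges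

/-- An Erdős–Menger `AB`-cut: an `AB`-cut orthogonal to some system of pairwise
edge-disjoint `AB`-paths. -/
def IsEMABCut (A B : Set V) (C : Set E) : Prop :=
  G.IsABCut A B C ∧
    ∃ Ps : Set G.Path, G.EdgeDisjoint Ps ∧ (∀ P ∈ Ps, G.IsABPath A B P) ∧ G.Orthogonal C Ps

/-- The order `⊴` on (Erdős–Menger) `AB`-cuts: on every `AB`-path the first edge of `C`
comes no later than the first edge of `C'`. -/
def ABCutLE (A B : Set V) (C C' : Set E) : Prop :=
  ∀ P : G.Path, G.IsABPath A B P →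
    ∀ i : Fin P.edges.length, P.edges.get i ∈ C' →
      ∃ j : Fin P.edges.length, (j : ℕ) ≤ (i : ℕ) ∧ P.edges.get j ∈ C

/-- `C` is the `⊴`-largest Erdős–Menger `AB`-cut. -/
def IsLargestEMABCut (A B : Set V) (C : Set E) : Prop :=
  G.IsEMABCut A B C ∧ ∀ C', G.IsEMABCut A B C' → G.ABCutLE A B C' C

/-- A system `Ps` of pairwise edge-disjoint `T`-paths *links* the terminal `t`:
it covers `δ(t)`. -/
def Links (Ps : Set G.Path) (t : V) : Prop :=
  G.IsTPathSystem Ps ∧ ∀ e ∈ G.edgeCut {t}, ∃ P ∈ Ps, e ∈ P.edges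

/-- The terminal `t` is linked. -/
def Linked (t : V) : Prop := ∃ Ps : Set G.Path, G.Links Ps t

/-- The linkability condition: every terminal is linked. -/
def LinkabilityCondition : Prop := ∀ t ∈ G.T, G.Linked t

/-- A perfect linkage: a system of pairwise edge-disjoint `T`-paths linking every
terminal. -/
def IsPerfectLinkage (Ps : Set G.Path) : Prop :=
  G.IsTPathSystem Ps ∧ ∀ t ∈ G.T, ∀ e ∈ G.edgeCut {t}, ∃ P ∈ Ps, e ∈ P.edges

/-- In the two-terminal setting: a system of pairwise edge-disjoint `st`-paths
covering `δ(s)` (a linkage of `s`). -/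
def IsStLinkage (s t : V) (Ps : Set G.Path) : Prop :=
  G.EdgeDisjoint Ps ∧ (∀ P ∈ Ps, G.IsABPath {s} {t} P) ∧
    ∀ e ∈ G.edgeCut {s}, ∃ P ∈ Ps, e ∈ P.edges

/-- `s` is linked (two-terminal setting). -/
def StLinked (s t : V) : Prop := ∃ Ps : Set G.Path, G.IsStLinkage s t Ps

/-- `λ_G(A,B)`: the maximal number of pairwise edge-disjoint `AB`-paths. -/
noncomputable def lambda (A B : Set V) : ℕ :=
  sSup {n : ℕ | ∃ Ps : Set G.Path, G.EdgeDisjoint Ps ∧ (∀ P ∈ Ps, G.IsABPath A B P) ∧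
    Ps.Finite ∧ Ps.ncard = n}

/-- The grapht obtained by deleting all edges outside `F`. -/
def restrict (F : Set E) : Grapht V F where
  I e := G.I e.1
  loopless e := G.loopless e.1
  T := G.T
  T_nontrivial := G.T_nontrivial

/-- The map sending every vertex of a contracted set `X t` (`t ∈ T`) to `t`. -/
noncomputable def contractMap (X : V → Set V) : V → V := fun v =>
  letI := Classical.dec (∃ u ∈ G.T, v ∈ X u)
  if h : ∃ u ∈ G.T, v ∈ X u then h.choose else v

/-- The contraction `G/ℱ` of the family `ℱ = {X t : t ∈ T}`: each `X t` is contracted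
to `t` and the arising loops are deleted. -/
noncomputable def contract (X : V → Set V) :
    Grapht V {e : E // ¬ ((G.I e).map (G.contractMap X)).IsDiag} where
  I e := (G.I e.1).map (G.contractMap X)
  loopless e := e.2
  T := G.T
  T_nontrivial := G.T_nontrivial

end Grapht

/-!
Write `C = δ(X)` with `s ∈ X`, let `Ps` be an edge-disjoint path system orthogonal to `C`, and let
`Qs` be a linkage of `s`. Following each `Q ∈ Qs` to its first exit from `X`, and from there the
path of `Ps` through that exit edge, gives another linkage of `s`, by trails. It uses `e`, say in
the trail `W`; as `e ∈ C`, this is the exit edge of `W`. Cut `W` just before `e`: no augmenting walk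
avoiding `e` leads from there to `t`, since augmenting would yield a linkage of `s` that avoids `e`.
Let `R` be the set of vertices that such walks reach. Then `Y = X ∩ (R ∪ {s})` has every edge of
`δ(Y)` covered by the trails while no trail enters `Y`, so `δ(Y)` is an Erdős–Menger cut containing
`e`, and by minimality `C ⊴ δ(Y)`. A path of `Ps` has no edge of `C` before its crossing of `C`, so
its part in `X` cannot leave `Y`. Hence every edge of `C` lies in `δ(Y)`, so in some trail, and is
therefore the first exit of a path of `Qs`.
-/

namespace Grapht

open Function

variable {V : Type u} {E : Type v} {G : Grapht V E}

/-! ### Darts and walks -/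

/-- A *dart*: an edge together with one of its two orientations. -/
@[ext]
structure Dart (G : Grapht V E) where
  src : V
  edge : E
  tgt : V
  inc : G.I edge = s(src, tgt)

namespace Dart

/-- The dart with the same edge and the opposite orientation. -/
def symm (d : G.Dart) : G.Dart := ⟨d.tgt, d.edge, d.src, by rw [d.inc, Sym2.eq_swap]⟩

theorem src_ne_tgt (d : G.Dart) : d.src ≠ d.tgt := by
  have := G.loopless d.edge
  rwa [d.inc, Sym2.mk_isDiag_iff] at this

theorem symm_ne (d : G.Dart) : d.symm ≠ d := fun h => d.src_ne_tgt (congrArg tgt h)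

theorem eq_or_eq_symm_of_edge_eq {d d' : G.Dart} (h : d.edge = d'.edge) :
    d = d' ∨ d = d'.symm := by
  have hI := d.inc.symm.trans ((congrArg G.I h).trans d'.inc)
  rcases Sym2.eq_iff.1 hI with ⟨hs, ht⟩ | ⟨hs, ht⟩
  · exact Or.inl (Dart.ext hs h ht)
  · exact Or.inr (Dart.ext hs h ht)

theorem ends_mem_of_edge_eq {S : Set V} {d d' : G.Dart} (h : d.edge = d'.edge)
    (hd : d.src ∈ S ∧ d.tgt ∈ S) : d'.src ∈ S ∧ d'.tgt ∈ S := by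
  rcases eq_or_eq_symm_of_edge_eq h with rfl | rfl
  exacts [hd, hd.symm]

end Dart

variable (G) in
/-- The darts leaving `X`: the edges of `δ(X)`, oriented away from `X`. -/
def outDarts (X : Set V) : Set G.Dart := {d | d.src ∈ X ∧ d.tgt ∉ X}

theorem mem_edgeCut_iff {X : Set V} {g : E} :
    g ∈ G.edgeCut X ↔ ∃ d ∈ G.outDarts X, d.edge = g :=
  ⟨fun ⟨u, w, hI, hu, hw⟩ => ⟨⟨u, g, w, hI⟩, ⟨hu, hw⟩, rfl⟩,
    fun ⟨d, hd, hg⟩ => ⟨d.src, d.tgt, hg ▸ d.inc, hd⟩⟩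

theorem edge_mem_edgeCut {X : Set V} {d : G.Dart} (hd : d ∈ G.outDarts X) :
    d.edge ∈ G.edgeCut X :=
  mem_edgeCut_iff.2 ⟨d, hd, rfl⟩

theorem edge_notMem_edgeCut {X : Set V} {d : G.Dart} (hd : d.src ∈ X ∧ d.tgt ∈ X) :
    d.edge ∉ G.edgeCut X := fun h =>
  have ⟨_, hd', he⟩ := mem_edgeCut_iff.1 h
  hd'.2 (Dart.ends_mem_of_edge_eq he.symm hd).2

theorem eq_of_edge_eq_of_mem_outDarts {X : Set V} {d d' : G.Dart} (hd : d ∈ G.outDarts X)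
    (hd' : d' ∈ G.outDarts X) (h : d.edge = d'.edge) : d = d' :=
  (Dart.eq_or_eq_symm_of_edge_eq h).resolve_right fun hs =>
    hd'.2 (hs ▸ hd.1 : d'.symm.src ∈ X)

theorem mem_outDarts_singleton {v : V} {d : G.Dart} : d ∈ G.outDarts {v} ↔ d.src = v :=
  ⟨fun h => h.1, fun h => ⟨h, fun h' => d.src_ne_tgt (h.trans h'.symm)⟩⟩

/-- `IsDartWalk a l b`: consecutive darts of `l` match up to a walk from `a` to `b`. -/
def IsDartWalk : V → List G.Dart → V → Prop
  | a, [], b => a = b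
  | a, d :: l, b => d.src = a ∧ IsDartWalk d.tgt l b

theorem isDartWalk_append {l₁ l₂ : List G.Dart} {a b : V} :
    IsDartWalk a (l₁ ++ l₂) b ↔ ∃ c, IsDartWalk a l₁ c ∧ IsDartWalk c l₂ b := by
  induction l₁ generalizing a with
  | nil => simp [IsDartWalk]
  | cons d l₁ ih => simp only [List.cons_append, IsDartWalk, ih, ← exists_and_left, and_assoc]

theorem isDartWalk_append_cons {l₁ l₂ : List G.Dart} {d : G.Dart} {a b : V} :
    IsDartWalk a (l₁ ++ d :: l₂) b ↔ IsDartWalk a l₁ d.src ∧ IsDartWalk d.tgt l₂ b := by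
  simp [isDartWalk_append, IsDartWalk]

namespace IsDartWalk

variable {l : List G.Dart} {a b : V}

theorem forall_src_mem {S : Set V} (h : IsDartWalk a l b) (ha : a ∈ S)
    (hS : ∀ d ∈ l, d.src ∈ S → d.tgt ∈ S) : ∀ d ∈ l, d.src ∈ S := by
  induction l generalizing a with
  | nil => simp
  | cons x l ih =>
    obtain ⟨rfl, h⟩ := h
    rw [List.forall_mem_cons] at hS ⊢
    exact ⟨ha, ih h (hS.1 ha) hS.2⟩

theorem last_mem {S : Set V} (h : IsDartWalk a l b) (ha : a ∈ S)
    (hS : ∀ d ∈ l, d.src ∈ S → d.tgt ∈ S) : b ∈ S := by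
  induction l generalizing a with
  | nil => exact h ▸ ha
  | cons x l ih =>
    obtain ⟨rfl, h⟩ := h
    rw [List.forall_mem_cons] at hS
    exact ih h (hS.1 ha) hS.2

theorem exists_first_exit {X : Set V} (h : IsDartWalk a l b) (ha : a ∈ X) (hb : b ∉ X) :
    ∃ l₁, ∃ d ∈ G.outDarts X, ∃ l₂, l = l₁ ++ d :: l₂ ∧ ∀ y ∈ l₁, y.src ∈ X ∧ y.tgt ∈ X := by
  induction l generalizing a with
  | nil => exact absurd (h ▸ ha) hb
  | cons x l ih =>
    obtain ⟨rfl, h⟩ := h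
    by_cases hx : x.tgt ∈ X
    · obtain ⟨l₁, d, hd, l₂, rfl, hl₁⟩ := ih h hx
      exact ⟨x :: l₁, d, hd, l₂, rfl, List.forall_mem_cons.2 ⟨⟨ha, hx⟩, hl₁⟩⟩
    · exact ⟨[], x, ⟨ha, hx⟩, l, rfl, by simp⟩

theorem eq_of_mem_outDarts {Y : Set V} (h : IsDartWalk a l b)
    (hY : ∀ d ∈ l, d.symm ∉ G.outDarts Y) {d d' : G.Dart} (hd : d ∈ l) (hd' : d' ∈ l)
    (hdY : d ∈ G.outDarts Y) (hdY' : d' ∈ G.outDarts Y) : d = d' := by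
  induction l generalizing a with
  | nil => simp at hd
  | cons x l ih =>
    obtain ⟨rfl, h⟩ := h
    rw [List.forall_mem_cons] at hY
    by_cases hx : x ∈ G.outDarts Y
    · have hout : ∀ y ∈ l, y.src ∉ Y :=
        h.forall_src_mem (S := Yᶜ) hx.2 fun y hy hys hyt => hY.2 y hy ⟨hyt, hys⟩
      have eq_x : ∀ y ∈ x :: l, y ∈ G.outDarts Y → y = x := fun y hy hyY =>
        (List.mem_cons.1 hy).resolve_right fun hyl => hout y hyl hyY.1
      rw [eq_x d hd hdY, eq_x d' hd' hdY']
    · have mem_l : ∀ y ∈ x :: l, y ∈ G.outDarts Y → y ∈ l := fun y hy hyY =>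
        (List.mem_cons.1 hy).resolve_left fun hyx => hx (hyx ▸ hyY)
      exact ih h hY.2 (mem_l d hd hdY) (mem_l d' hd' hdY')

theorem nodup_edges (h : IsDartWalk a l b) (hn : (a :: l.map Dart.tgt).Nodup) :
    (l.map Dart.edge).Nodup := by
  induction l generalizing a with
  | nil => simp
  | cons x l ih =>
    obtain ⟨rfl, h⟩ := h
    obtain ⟨hx, hn⟩ := List.nodup_cons.1 hn
    refine List.nodup_cons.2 ⟨fun hmem => ?_, ih h hn⟩
    obtain ⟨y, hy, hyx⟩ := List.mem_map.1 hmem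
    rcases Dart.eq_or_eq_symm_of_edge_eq hyx with rfl | rfl
    · exact (List.nodup_cons.1 hn).1 (List.mem_map_of_mem hy)
    · exact hx (List.mem_cons_of_mem _ (List.mem_map_of_mem (f := Dart.tgt) hy))

theorem exists_suffix (h : IsDartWalk a l b) {c : V} (hc : c ∈ a :: l.map Dart.tgt) :
    ∃ l', l' <:+ l ∧ c :: l'.map Dart.tgt <:+ a :: l.map Dart.tgt ∧ IsDartWalk c l' b := by
  induction l generalizing a with
  | nil =>
    obtain rfl : c = a := by simpa using hc
    exact ⟨[], List.suffix_rfl, List.suffix_rfl, h⟩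
  | cons x l ih =>
    rcases List.mem_cons.1 hc with rfl | hc
    · exact ⟨_, List.suffix_rfl, List.suffix_rfl, h⟩
    · obtain ⟨l', hl', hverts, hw⟩ := ih h.2 hc
      exact ⟨l', hl'.trans (List.suffix_cons _ _), hverts.trans (List.suffix_cons _ _), hw⟩

theorem exists_simple (h : IsDartWalk a l b) :
    ∃ l' ⊆ l, IsDartWalk a l' b ∧ (a :: l'.map Dart.tgt).Nodup := by
  induction l generalizing a with
  | nil => exact ⟨[], List.Subset.refl _, h, by simp⟩
  | cons x l ih =>
    obtain ⟨rfl, h⟩ := h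
    obtain ⟨l', hsub, hw, hn⟩ := ih h
    by_cases hmem : x.src ∈ x.tgt :: l'.map Dart.tgt
    · obtain ⟨l'', hl'', hverts, hw'⟩ := hw.exists_suffix hmem
      exact ⟨l'', fun y hy => List.mem_cons_of_mem _ (hsub (hl''.subset hy)), hw',
        hn.sublist hverts.sublist⟩
    · exact ⟨x :: l', List.cons_subset_cons _ hsub, ⟨rfl, hw⟩, List.nodup_cons.2 ⟨hmem, hn⟩⟩

theorem isWalk (h : IsDartWalk a l b) :
    G.IsWalk (a :: l.map Dart.tgt) (l.map Dart.edge) := by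
  induction l generalizing a with
  | nil => exact IsWalk.nil a
  | cons x l ih =>
    obtain ⟨rfl, h⟩ := h
    exact IsWalk.cons x.inc (ih h)

theorem getLast?_verts (h : IsDartWalk a l b) : (a :: l.map Dart.tgt).getLast? = some b := by
  induction l generalizing a with
  | nil => exact congrArg some h
  | cons x l ih => simpa [List.getLast?_cons_cons] using ih h.2

end IsDartWalk

theorem IsWalk.exists_darts {vs : List V} {es : List E} (h : G.IsWalk vs es) {a b : V}
    (ha : vs.head? = some a) (hb : vs.getLast? = some b) :
    ∃ l : List G.Dart, IsDartWalk a l b ∧ l.map Dart.edge = es ∧ a :: l.map Dart.tgt = vs := by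
  induction h generalizing a with
  | nil v =>
    obtain rfl : v = a := by simpa using ha
    obtain rfl : v = b := by simpa using hb
    exact ⟨[], rfl, rfl, rfl⟩
  | @cons u w vs g es hI _ ih =>
    obtain rfl : u = a := by simpa using ha
    obtain ⟨l, hw, rfl, hvs⟩ := ih rfl (by rwa [List.getLast?_cons_cons] at hb)
    exact ⟨⟨u, g, w, hI⟩ :: l, ⟨rfl, hw⟩, rfl, by simp [hvs]⟩

namespace Path

theorem exists_darts (P : G.Path) :
    ∃ l : List G.Dart, IsDartWalk P.first l P.last ∧ l.map Dart.edge = P.edges ∧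
      P.first :: l.map Dart.tgt = P.verts :=
  P.isWalk.exists_darts P.head_eq P.getLast_eq

/-- The darts traversed by a path, in order. -/
noncomputable def darts (P : G.Path) : List G.Dart := P.exists_darts.choose

theorem isDartWalk_darts (P : G.Path) : IsDartWalk P.first P.darts P.last :=
  P.exists_darts.choose_spec.1

theorem map_edge_darts (P : G.Path) : P.darts.map Dart.edge = P.edges :=
  P.exists_darts.choose_spec.2.1

theorem nodup_verts_darts (P : G.Path) : (P.first :: P.darts.map Dart.tgt).Nodup :=
  P.exists_darts.choose_spec.2.2.symm ▸ P.nodup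

theorem nodup_edges (P : G.Path) : P.edges.Nodup :=
  P.map_edge_darts ▸ P.isDartWalk_darts.nodup_edges P.nodup_verts_darts

theorem tgt_ne_first (P : G.Path) {d : G.Dart} (hd : d ∈ P.darts) : d.tgt ≠ P.first := fun h =>
  (List.nodup_cons.1 P.nodup_verts_darts).1 (h ▸ List.mem_map_of_mem hd)

theorem edge_mem_edges {P : G.Path} {d : G.Dart} (hd : d ∈ P.darts) : d.edge ∈ P.edges :=
  P.map_edge_darts ▸ List.mem_map_of_mem hd

theorem exists_dart_of_mem_edges {P : G.Path} {g : E} (hg : g ∈ P.edges) :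
    ∃ d ∈ P.darts, d.edge = g :=
  List.mem_map.1 (P.map_edge_darts.symm ▸ hg)

theorem mem_darts_of_src_eq_first {P : G.Path} {d : G.Dart} (hd : d.edge ∈ P.edges)
    (hsrc : d.src = P.first) : d ∈ P.darts := by
  obtain ⟨d', hd', he⟩ := exists_dart_of_mem_edges hd
  rcases Dart.eq_or_eq_symm_of_edge_eq he with rfl | rfl
  exacts [hd', absurd hsrc (P.tgt_ne_first hd')]

theorem src_ne_first_of_darts_eq {P : G.Path} {A B : List G.Dart} {d y : G.Dart}
    (hP : P.darts = A ++ d :: B) (hy : y ∈ B) : y.src ≠ P.first := by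
  have hne : ∀ z ∈ d :: B, z.tgt ≠ P.first := fun z hz =>
    P.tgt_ne_first (hP ▸ List.mem_append_right A hz)
  rw [List.forall_mem_cons] at hne
  exact (isDartWalk_append_cons.1 (hP ▸ P.isDartWalk_darts)).2.forall_src_mem
    (S := {P.first}ᶜ) hne.1 (fun z hz _ => hne.2 z hz) y hy

end Path

theorem IsABPath.isDartWalk_darts {a b : V} {P : G.Path} (hP : G.IsABPath {a} {b} P) :
    IsDartWalk a P.darts b := by
  have h := P.isDartWalk_darts
  rwa [hP.1, hP.2.1] at h

theorem Path.isABPath (P : G.Path) : G.IsABPath {P.first} {P.last} P := by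
  refine ⟨rfl, rfl, fun v hv => ?_⟩
  obtain ⟨xs, hxs⟩ := List.head?_eq_some_iff.1 P.head_eq
  obtain ⟨ys, hys⟩ := List.getLast?_eq_some_iff.1 P.getLast_eq
  have hinner_xs : P.inner = xs.dropLast := by simp [Path.inner, hxs]
  have hinner_ys : P.inner = ys.tail := by simp [Path.inner, hys, ← List.tail_dropLast]
  rintro (rfl | rfl)
  · have hn := hxs ▸ P.nodup
    exact (List.nodup_cons.1 hn).1 (List.mem_of_mem_dropLast (hinner_xs ▸ hv))
  · have hn := hys ▸ P.nodup
    exact (List.nodup_append.1 hn).2.2 _ (List.mem_of_mem_tail (hinner_ys ▸ hv)) _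
      (List.mem_singleton_self _) rfl

theorem IsDartWalk.exists_isABPath {l : List G.Dart} {a b : V} (h : IsDartWalk a l b) :
    ∃ P : G.Path, G.IsABPath {a} {b} P ∧ P.edges ⊆ l.map Dart.edge := by
  obtain ⟨l', hsub, hw, hn⟩ := h.exists_simple
  exact ⟨⟨a, b, _, _, hw.isWalk, hn, rfl, hw.getLast?_verts⟩, Path.isABPath _,
    List.map_subset _ hsub⟩

/-! ### Cuts -/

/-- The vertices reachable from `a` along darts of `D`: both the source side of an `st`-cut and
the vertices reachable in a residual digraph have this form. -/
def reach (D : Set G.Dart) (a : V) : Set V :=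
  {x | ∃ l, IsDartWalk a l x ∧ ∀ d ∈ l, d ∈ D}

theorem mem_reach_self (D : Set G.Dart) (a : V) : a ∈ reach D a := ⟨[], rfl, by simp⟩

theorem tgt_mem_reach {D : Set G.Dart} {a : V} {d : G.Dart} (hd : d ∈ D)
    (h : d.src ∈ reach D a) : d.tgt ∈ reach D a := by
  obtain ⟨l, hl, hlD⟩ := h
  refine ⟨l ++ [d], isDartWalk_append_cons.2 ⟨hl, rfl⟩, fun y hy => ?_⟩
  rcases List.mem_append.1 hy with hy | hy
  exacts [hlD y hy, List.mem_singleton.1 hy ▸ hd]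

theorem exists_mem_outDarts_edge_mem {a b : V} {P : G.Path} (hP : G.IsABPath {a} {b} P)
    {X : Set V} (ha : a ∈ X) (hb : b ∉ X) : ∃ d ∈ G.outDarts X, d.edge ∈ P.edges := by
  obtain ⟨l₁, d, hd, l₂, hl, -⟩ := hP.isDartWalk_darts.exists_first_exit ha hb
  exact ⟨d, hd, P.edge_mem_edges (by simp [hl])⟩

theorem isABCut_edgeCut {a b : V} {X : Set V} (ha : a ∈ X) (hb : b ∉ X) :
    G.IsABCut {a} {b} (G.edgeCut X) := fun _ hP =>
  have ⟨d, hd, hdP⟩ := exists_mem_outDarts_edge_mem hP ha hb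
  ⟨d.edge, edge_mem_edgeCut hd, hdP⟩

theorem IsEMABCut.exists_edgeCut_eq {s t : V} {C : Set E} (hC : G.IsEMABCut {s} {t} C) :
    ∃ X : Set V, s ∈ X ∧ t ∉ X ∧ G.edgeCut X = C := by
  obtain ⟨hcut, Ps, -, hPs, honce, hcover⟩ := hC
  set X : Set V := reach {d : G.Dart | d.edge ∉ C} s
  have hsX : s ∈ X := mem_reach_self _ s
  have htX : t ∉ X := by
    rintro ⟨l, hl, hlC⟩
    obtain ⟨P, hP, hPl⟩ := hl.exists_isABPath
    obtain ⟨c, hc, hcP⟩ := hcut P hP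
    obtain ⟨d, hd, rfl⟩ := List.mem_map.1 (hPl hcP)
    exact hlC d hd hc
  have hXC : G.edgeCut X ⊆ C := by
    intro g hg
    obtain ⟨d, hd, rfl⟩ := mem_edgeCut_iff.1 hg
    by_contra hdC
    exact hd.2 (tgt_mem_reach hdC hd.1)
  refine ⟨X, hsX, htX, hXC.antisymm fun c hc => ?_⟩
  obtain ⟨P, hP, hcP⟩ := hcover c hc
  obtain ⟨d, hd, hdP⟩ := exists_mem_outDarts_edge_mem (hPs P hP) hsX htX
  have hdX : d.edge ∈ G.edgeCut X := edge_mem_edgeCut hd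
  rwa [← (honce P hP).unique ⟨hXC hdX, hdP⟩ ⟨hc, hcP⟩]

theorem ABCutLE.exists_mem_prefix {A B : Set V} {C C' : Set E} (h : G.ABCutLE A B C C')
    {P : G.Path} (hP : G.IsABPath A B P) {l₁ l₂ : List E} {g : E}
    (hE : P.edges = l₁ ++ g :: l₂) (hg : g ∈ C') : ∃ c ∈ C, c ∈ l₁ ++ [g] := by
  obtain ⟨⟨j, hj⟩, hjle, hjC⟩ := h P hP ⟨l₁.length, by simp [hE]⟩ (by simpa [hE] using hg)
  refine ⟨_, hjC, ?_⟩
  have hpre : l₁ ++ [g] <+: P.edges := ⟨l₂, by simp [hE]⟩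
  have hlt : j < (l₁ ++ [g]).length := by simpa [Nat.lt_succ_iff] using hjle
  exact List.mem_of_getElem (h := hlt) (hpre.getElem hlt)

/-! ### Linkages by trails and augmentation -/

/-- A family of dart lists using every edge at most once, counting both orientations. -/
structure EdgeDisjointFamily {ι : Type*} (W : ι → List G.Dart) : Prop where
  nodup : ∀ i, ((W i).map Dart.edge).Nodup
  eq_of_edge_eq : ∀ {i j d d'}, d ∈ W i → d' ∈ W j → d.edge = d'.edge → i = j

/-- The darts used by a family of dart lists. -/
def dartSet {ι : Type*} (W : ι → List G.Dart) : Set G.Dart := {d | ∃ i, d ∈ W i}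

/-- A linkage of `s` by trails: edge-disjoint trails `W i` from `s` to `τ i` that never return
to `s` and together traverse every dart leaving `s`. The ends may vary so that a single trail can
be cut short and then extended along an augmenting walk. -/
structure IsTrailLinkage {ι : Type*} (s : V) (τ : ι → V) (W : ι → List G.Dart) : Prop where
  isDartWalk : ∀ i, IsDartWalk s (W i) (τ i)
  tgt_ne : ∀ d ∈ dartSet W, d.tgt ≠ s
  disjoint : EdgeDisjointFamily W
  cover : ∀ d, d.src = s → d ∈ dartSet W

variable {ι : Type*} {W : ι → List G.Dart} {s t : V}

/-- The darts usable by an augmenting walk that may not use the edge `e`. A dart opposite to a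
trail dart is usable: pushing along it cancels the trail dart. -/
def residual (s : V) (W : ι → List G.Dart) (e : E) : Set G.Dart :=
  {d | d.tgt ≠ s ∧ d.edge ≠ e ∧ d ∉ dartSet W}

theorem EdgeDisjointFamily.replace [DecidableEq ι] (h : EdgeDisjointFamily W) {i : ι}
    {l : List G.Dart} (hl : (l.map Dart.edge).Nodup)
    (hdisj : ∀ d ∈ l, ∀ j ≠ i, ∀ d' ∈ W j, d.edge ≠ d'.edge) :
    EdgeDisjointFamily (update W i l) where
  nodup j := by
    by_cases hj : j = i
    · subst hj; simpa using hl
    · simpa [hj] using h.nodup j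
  eq_of_edge_eq {j k d d'} hd hd' he := by
    by_cases hj : j = i <;> by_cases hk : k = i
    · rw [hj, hk]
    · subst hj
      simp only [update_self, update_of_ne hk] at hd hd'
      exact absurd he (hdisj d hd k hk d' hd')
    · subst hk
      simp only [update_self, update_of_ne hj] at hd hd'
      exact absurd he.symm (hdisj d' hd' j hj d hd)
    · simp only [update_of_ne hj, update_of_ne hk] at hd hd'
      exact h.eq_of_edge_eq hd hd' he

theorem EdgeDisjointFamily.edge_ne_of_mem_update [DecidableEq ι] (h : EdgeDisjointFamily W) {k : ι}
    {l₁ l₂ : List G.Dart} (hk : W k = l₁ ++ l₂) {d d' : G.Dart} (hd : d ∈ l₂)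
    (hd' : d' ∈ dartSet (update W k l₁)) : d.edge ≠ d'.edge := fun he => by
  have hdk : d ∈ W k := hk ▸ List.mem_append_right l₁ hd
  obtain ⟨j, hj⟩ := hd'
  by_cases hjk : j = k
  · subst hjk
    have hn := hk ▸ h.nodup j
    rw [List.map_append, List.nodup_append] at hn
    exact hn.2.2 _ (List.mem_map_of_mem (by simpa using hj)) _ (List.mem_map_of_mem hd) he.symm
  · exact hjk (h.eq_of_edge_eq hdk (by simpa [hjk] using hj) he).symm

theorem EdgeDisjointFamily.symm_notMem (h : EdgeDisjointFamily W) {d : G.Dart}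
    (hd : d ∈ dartSet W) : d.symm ∉ dartSet W := by
  rintro ⟨j, hj⟩
  obtain ⟨i, hi⟩ := hd
  obtain rfl := h.eq_of_edge_eq hi hj rfl
  exact d.symm_ne (List.inj_on_of_nodup_map (h.nodup i) hj hi rfl)

theorem dartSet_update_subset [DecidableEq ι] {S : Set G.Dart} (hW : dartSet W ⊆ S) {i : ι}
    {l : List G.Dart} (hl : ∀ d ∈ l, d ∈ S) : dartSet (update W i l) ⊆ S := by
  rintro d ⟨j, hd⟩
  by_cases hj : j = i
  · subst hj; exact hl d (by simpa using hd)
  · exact hW ⟨j, by simpa [hj] using hd⟩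

namespace IsTrailLinkage

variable {τ : ι → V}

theorem replace [DecidableEq ι] (h : IsTrailLinkage s τ W) {i : ι} {l : List G.Dart} {y : V}
    (hw : IsDartWalk s l y) (hs : ∀ d ∈ l, d.tgt ≠ s) (hl : (l.map Dart.edge).Nodup)
    (hdisj : ∀ d ∈ l, ∀ j ≠ i, ∀ d' ∈ W j, d.edge ≠ d'.edge)
    (hcover : ∀ d ∈ W i, d.src = s → d ∈ l) :
    IsTrailLinkage s (update τ i y) (update W i l) where
  isDartWalk j := by
    by_cases hj : j = i
    · subst hj; simpa using hw
    · simpa [hj] using h.isDartWalk j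
  tgt_ne := by
    rintro d ⟨j, hd⟩
    by_cases hj : j = i
    · subst hj; exact hs d (by simpa using hd)
    · exact h.tgt_ne d ⟨j, by simpa [hj] using hd⟩
  disjoint := h.disjoint.replace hl hdisj
  cover d hd := by
    obtain ⟨j, hj⟩ := h.cover d hd
    by_cases hji : j = i
    · subst hji; exact ⟨j, by simpa using hcover d hj hd⟩
    · exact ⟨j, by simpa [hji] using hj⟩

theorem truncate [DecidableEq ι] (h : IsTrailLinkage s τ W) {i : ι} {l₁ l₂ : List G.Dart} {y : V}
    (hi : W i = l₁ ++ l₂) (hw : IsDartWalk s l₁ y) (hw₂ : IsDartWalk y l₂ (τ i)) (hy : y ≠ s) :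
    IsTrailLinkage s (update τ i y) (update W i l₁) := by
  have hsub : l₁.Sublist (W i) := hi ▸ List.sublist_append_left l₁ l₂
  have hmem : ∀ d ∈ l₂, d ∈ W i := by simp +contextual [hi]
  have hsrc : ∀ d ∈ l₂, d.src ≠ s :=
    hw₂.forall_src_mem (S := {s}ᶜ) hy fun d hd _ => h.tgt_ne d ⟨i, hmem d hd⟩
  refine h.replace hw (fun d hd => h.tgt_ne d ⟨i, hsub.subset hd⟩)
    ((h.disjoint.nodup i).sublist (hsub.map _)) (fun d hd j hj d' hd' he => ?_)
    fun d hd hds => (List.mem_append.1 (hi ▸ hd)).resolve_right fun hd₂ => hsrc d hd₂ hds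
  exact hj (h.disjoint.eq_of_edge_eq hd' (hsub.subset hd) he.symm)

theorem append [DecidableEq ι] (h : IsTrailLinkage s τ W) {i : ι} {l : List G.Dart} {y : V}
    (hw : IsDartWalk (τ i) l y) (hs : ∀ d ∈ l, d.tgt ≠ s) (hl : (l.map Dart.edge).Nodup)
    (hfree : ∀ d ∈ l, ∀ d' ∈ dartSet W, d.edge ≠ d'.edge) :
    IsTrailLinkage s (update τ i y) (update W i (W i ++ l)) := by
  refine h.replace (isDartWalk_append.2 ⟨_, h.isDartWalk i, hw⟩) (fun d hd => ?_) ?_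
    (fun d hd j hj d' hd' he => ?_) fun d hd _ => List.mem_append_left l hd
  · exact (List.mem_append.1 hd).elim (fun hd => h.tgt_ne d ⟨i, hd⟩) (hs d)
  · rw [List.map_append]
    refine (h.disjoint.nodup i).append hl fun g hg hg' => ?_
    obtain ⟨d, hd, rfl⟩ := List.mem_map.1 hg
    obtain ⟨d', hd', he⟩ := List.mem_map.1 hg'
    exact hfree d' hd' d ⟨i, hd⟩ he
  · rcases List.mem_append.1 hd with hd | hd
    · exact hj (h.disjoint.eq_of_edge_eq hd' hd he.symm)
    · exact hfree d hd d' ⟨j, hd'⟩ he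

theorem push_of_symm_notMem [DecidableEq ι] {d : G.Dart} {i : ι}
    (h : IsTrailLinkage s (update τ i d.src) W) (hd : d ∉ dartSet W)
    (hsymm : d.symm ∉ dartSet W) (hds : d.tgt ≠ s) :
    IsTrailLinkage s (update τ i d.tgt) (update W i (W i ++ [d])) := by
  have h' := h.append (i := i) (l := [d]) (y := d.tgt) (by simp [IsDartWalk]) (by simpa)
    (by simp) fun y hy d' hd' he => ?_
  · rwa [update_idem] at h'
  · obtain rfl := List.mem_singleton.1 hy
    rcases Dart.eq_or_eq_symm_of_edge_eq he with rfl | rfl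
    exacts [hd hd', hsymm hd']

-- The trail using `d.symm` stops in front of it, and the trail ending at `d.src` takes over the
-- part behind it.
theorem exists_cancel [DecidableEq ι] {d : G.Dart} {i : ι}
    (h : IsTrailLinkage s (update (fun _ => t) i d.src) W) (hsymm : d.symm ∈ dartSet W)
    (hds : d.tgt ≠ s) :
    ∃ (j : ι) (W' : ι → List G.Dart),
      IsTrailLinkage s (update (fun _ => t) j d.tgt) W' ∧ dartSet W' ⊆ dartSet W := by
  obtain ⟨k, hk⟩ := hsymm
  obtain ⟨l₁, l₂, hk⟩ := List.append_of_mem hk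
  obtain ⟨hw₁, hw₂⟩ : IsDartWalk s l₁ d.tgt ∧
      IsDartWalk d.src l₂ (update (fun _ => t) i d.src k) :=
    isDartWalk_append_cons.1 (hk ▸ h.isDartWalk k)
  have hmem : ∀ y ∈ l₁ ++ d.symm :: l₂, y ∈ dartSet W := fun y hy => ⟨k, hk ▸ hy⟩
  have h₁ := h.truncate hk hw₁ ⟨rfl, hw₂⟩ hds
  have hW₁ : dartSet (update W k l₁) ⊆ dartSet W :=
    dartSet_update_subset subset_rfl fun y hy => hmem y (by simp [hy])
  by_cases hki : k = i
  · subst hki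
    exact ⟨k, _, by simpa using h₁, hW₁⟩
  · rw [update_of_ne hki] at hw₂
    have hend : update (update (fun _ => t) i d.src) k d.tgt i = d.src := by
      simp [Ne.symm hki]
    have hl₂ : l₂.Sublist (W k) :=
      hk ▸ (List.sublist_cons_self _ _).trans (List.sublist_append_right _ _)
    have h₂ := h₁.append (i := i) (hend ▸ hw₂) (fun y hy => h.tgt_ne y ⟨k, hl₂.subset hy⟩)
      ((h.disjoint.nodup k).sublist (hl₂.map _)) fun y hy y' hy' =>
        h.disjoint.edge_ne_of_mem_update hk (List.mem_cons_of_mem _ hy) hy'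
    rw [update_comm hki, update_idem, update_eq_self_iff.2 rfl] at h₂
    refine ⟨k, _, h₂, dartSet_update_subset hW₁ fun y hy => ?_⟩
    exact (List.mem_append.1 hy).elim (fun hy => hW₁ ⟨i, hy⟩) fun hy => ⟨k, hl₂.subset hy⟩

theorem exists_push [DecidableEq ι] {d : G.Dart} {i : ι}
    (h : IsTrailLinkage s (update (fun _ => t) i d.src) W) (hd : d ∉ dartSet W)
    (hds : d.tgt ≠ s) :
    ∃ (j : ι) (W' : ι → List G.Dart),
      IsTrailLinkage s (update (fun _ => t) j d.tgt) W' ∧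
        dartSet W' ⊆ insert d (dartSet W) := by
  have hW : dartSet W ⊆ insert d (dartSet W) := Set.subset_insert _ _
  by_cases hsymm : d.symm ∈ dartSet W
  · obtain ⟨j, W', h', hsub⟩ := h.exists_cancel hsymm hds
    exact ⟨j, W', h', hsub.trans hW⟩
  · refine ⟨i, _, h.push_of_symm_notMem hd hsymm hds, dartSet_update_subset hW fun y hy => ?_⟩
    exact (List.mem_append.1 hy).elim (fun hy => hW ⟨i, hy⟩) fun hy =>
      Or.inl (List.mem_singleton.1 hy)

theorem exists_augment [DecidableEq ι] {x y : V} {i : ι} {L : List G.Dart}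
    (h : IsTrailLinkage s (update (fun _ => t) i x) W) (hL : IsDartWalk x L y)
    (hn : L.Nodup) (hs : ∀ d ∈ L, d.tgt ≠ s) (hfree : ∀ d ∈ L, d ∉ dartSet W) :
    ∃ (j : ι) (W' : ι → List G.Dart),
      IsTrailLinkage s (update (fun _ => t) j y) W' ∧
        dartSet W' ⊆ dartSet W ∪ {d | d ∈ L} := by
  induction L generalizing x i W with
  | nil => exact ⟨i, W, hL ▸ h, Set.subset_union_left⟩
  | cons d L ih =>
    obtain ⟨rfl, hL⟩ := hL
    obtain ⟨hdL, hn⟩ := List.nodup_cons.1 hn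
    rw [List.forall_mem_cons] at hs hfree
    obtain ⟨j, W₁, h₁, hsub₁⟩ := h.exists_push hfree.1 hs.1
    obtain ⟨k, W₂, h₂, hsub₂⟩ := ih h₁ hL hn hs.2 fun y hy hyW =>
      (hsub₁ hyW).elim (fun hyd => hdL (hyd ▸ hy)) (hfree.2 y hy)
    refine ⟨k, W₂, h₂, hsub₂.trans (Set.union_subset (hsub₁.trans ?_) ?_)⟩
    · exact Set.insert_subset (Or.inr List.mem_cons_self) Set.subset_union_left
    · exact fun y hy => Or.inr (List.mem_cons_of_mem d hy)

theorem exists_paths (h : IsTrailLinkage s (fun _ => t) W) :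
    ∃ Ps : Set G.Path, G.EdgeDisjoint Ps ∧ (∀ P ∈ Ps, G.IsABPath {s} {t} P) ∧
      (∀ P ∈ Ps, ∃ i, P.edges ⊆ (W i).map Dart.edge) ∧
      ∀ i, ∃ P ∈ Ps, P.edges ⊆ (W i).map Dart.edge := by
  choose P hP hPW using fun i => (h.isDartWalk i).exists_isABPath
  refine ⟨Set.range P, ?_, Set.forall_mem_range.2 hP, Set.forall_mem_range.2 fun i => ⟨i, hPW i⟩,
    fun i => ⟨P i, ⟨i, rfl⟩, hPW i⟩⟩
  rintro _ ⟨i, rfl⟩ _ ⟨j, rfl⟩ hij g hgi hgj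
  obtain ⟨d, hd, rfl⟩ := List.mem_map.1 (hPW i hgi)
  obtain ⟨d', hd', he⟩ := List.mem_map.1 (hPW j hgj)
  exact hij (congrArg P (h.disjoint.eq_of_edge_eq hd hd' he.symm))

theorem orthogonal_edgeCut (h : IsTrailLinkage s (fun _ => t) W) {Ps : Set G.Path}
    (hPs : ∀ P ∈ Ps, G.IsABPath {s} {t} P) (hPW : ∀ P ∈ Ps, ∃ i, P.edges ⊆ (W i).map Dart.edge)
    (hWP : ∀ i, ∃ P ∈ Ps, P.edges ⊆ (W i).map Dart.edge) {Y : Set V} (hsY : s ∈ Y) (htY : t ∉ Y)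
    (hin : ∀ d ∈ dartSet W, d.symm ∉ G.outDarts Y) (hout : G.outDarts Y ⊆ dartSet W) :
    G.Orthogonal (G.edgeCut Y) Ps := by
  have exists_out : ∀ i, ∀ g ∈ G.edgeCut Y, g ∈ (W i).map Dart.edge →
      ∃ d ∈ W i, d ∈ G.outDarts Y ∧ d.edge = g := by
    intro i g hg hgW
    obtain ⟨d, hd, rfl⟩ := mem_edgeCut_iff.1 hg
    obtain ⟨d', hd', he⟩ := List.mem_map.1 hgW
    rcases Dart.eq_or_eq_symm_of_edge_eq he with rfl | rfl
    exacts [⟨d', hd', hd, rfl⟩, absurd hd (hin d.symm ⟨i, hd'⟩)]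
  have unique : ∀ i, ∀ g ∈ G.edgeCut Y, ∀ g' ∈ G.edgeCut Y, g ∈ (W i).map Dart.edge →
      g' ∈ (W i).map Dart.edge → g = g' := by
    intro i g hg g' hg' hgW hgW'
    obtain ⟨d, hd, hdY, rfl⟩ := exists_out i g hg hgW
    obtain ⟨d', hd', hdY', rfl⟩ := exists_out i g' hg' hgW'
    rw [(h.isDartWalk i).eq_of_mem_outDarts (fun y hy => hin y ⟨i, hy⟩) hd hd' hdY hdY']
  refine ⟨fun P hP => ?_, fun g hg => ?_⟩
  · obtain ⟨i, hPi⟩ := hPW P hP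
    obtain ⟨g, hg, hgP⟩ := isABCut_edgeCut hsY htY P (hPs P hP)
    exact ⟨g, ⟨hg, hgP⟩, fun g' hg' => unique i g' hg'.1 g hg (hPi hg'.2) (hPi hgP)⟩
  · obtain ⟨d, hd, rfl⟩ := mem_edgeCut_iff.1 hg
    obtain ⟨i, hdi⟩ := hout hd
    obtain ⟨P, hP, hPi⟩ := hWP i
    obtain ⟨g', hg', hgP⟩ := isABCut_edgeCut hsY htY P (hPs P hP)
    rw [unique i _ hg g' hg' (List.mem_map_of_mem hdi) (hPi hgP)]
    exact ⟨P, hP, hgP⟩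

theorem isEMABCut_edgeCut (h : IsTrailLinkage s (fun _ => t) W) {Y : Set V} (hsY : s ∈ Y)
    (htY : t ∉ Y) (hin : ∀ d ∈ dartSet W, d.symm ∉ G.outDarts Y)
    (hout : G.outDarts Y ⊆ dartSet W) : G.IsEMABCut {s} {t} (G.edgeCut Y) := by
  obtain ⟨Ps, hdisj, hPs, hPW, hWP⟩ := h.exists_paths
  exact ⟨isABCut_edgeCut hsY htY, Ps, hdisj, hPs,
    h.orthogonal_edgeCut hPs hPW hWP hsY htY hin hout⟩

theorem exists_isStLinkage (h : IsTrailLinkage s (fun _ => t) W) (hst : s ≠ t) :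
    ∃ Ps, G.IsStLinkage s t Ps ∧ ∀ P ∈ Ps, ∃ i, P.edges ⊆ (W i).map Dart.edge := by
  obtain ⟨Ps, hdisj, hPs, hPW, hWP⟩ := h.exists_paths
  refine ⟨Ps, ⟨hdisj, hPs, (h.orthogonal_edgeCut hPs hPW hWP (Y := {s}) rfl hst.symm ?_ ?_).2⟩, hPW⟩
  · exact fun d hd hds => h.tgt_ne d hd hds.1
  · exact fun d hd => h.cover d hd.1

theorem exists_mem_dartSet_edge_eq (h : IsTrailLinkage s (fun _ => t) W) (hst : s ≠ t) {e : E}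
    (huses : ∀ Ps, G.IsStLinkage s t Ps → ∃ P ∈ Ps, e ∈ P.edges) :
    ∃ d ∈ dartSet W, d.edge = e := by
  obtain ⟨Ps, hPs, hPW⟩ := h.exists_isStLinkage hst
  obtain ⟨P, hP, heP⟩ := huses Ps hPs
  obtain ⟨i, hi⟩ := hPW P hP
  obtain ⟨d, hd, hde⟩ := List.mem_map.1 (hi heP)
  exact ⟨d, ⟨i, hd⟩, hde⟩

theorem target_notMem_reach_residual (h : IsTrailLinkage s (fun _ => t) W) (hst : s ≠ t) {i : ι}
    {l₁ l₂ : List G.Dart} {d : G.Dart} (hi : W i = l₁ ++ d :: l₂) (hds : d.src ≠ s)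
    (huses : ∀ Ps, G.IsStLinkage s t Ps → ∃ P ∈ Ps, d.edge ∈ P.edges) :
    t ∉ reach (residual s W d.edge) d.src := by
  classical
  rintro ⟨L, hL, hLD⟩
  obtain ⟨L', hsub, hL', hn⟩ := hL.exists_simple
  have hres : ∀ y ∈ L', y ∈ residual s W d.edge := fun y hy => hLD y (hsub hy)
  obtain ⟨hw₁, hw₂⟩ := isDartWalk_append_cons.1 (hi ▸ h.isDartWalk i)
  have hcut : dartSet (update W i l₁) ⊆ dartSet W :=
    dartSet_update_subset subset_rfl fun y hy => ⟨i, by simp [hi, hy]⟩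
  obtain ⟨j, W', h', hW'⟩ := (h.truncate hi hw₁ ⟨rfl, hw₂⟩ hds).exists_augment hL'
    (List.Nodup.of_map _ (List.nodup_cons.1 hn).2) (fun y hy => (hres y hy).1)
    fun y hy hyW => (hres y hy).2.2 (hcut hyW)
  rw [update_eq_self_iff.2 rfl] at h'
  obtain ⟨y, hy, hye⟩ := h'.exists_mem_dartSet_edge_eq hst huses
  rcases hW' hy with hy | hy
  · exact h.disjoint.edge_ne_of_mem_update hi List.mem_cons_self hy hye.symm
  · exact (hres y hy).2.1 hye

end IsTrailLinkage

/-! ### Crossing a cut -/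

/-- Heads of a path system crossing `X`: the edge-disjoint initial segments `H i` inside `X`,
continued by distinct exit darts `x i`; together they traverse every dart leaving `s`. -/
structure IsHeadSystem (s : V) (X : Set V) (H : ι → List G.Dart) (x : ι → G.outDarts X) :
    Prop where
  isDartWalk : ∀ i, IsDartWalk s (H i) (x i).1.src
  inside : ∀ d ∈ dartSet H, d.src ∈ X ∧ d.tgt ∈ X
  tgt_ne : ∀ d ∈ dartSet H, d.tgt ≠ s
  disjoint : EdgeDisjointFamily H
  injective : Injective x
  cover : ∀ d, d.src = s → d ∈ dartSet H ∨ ∃ i, d = x i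

/-- Tails of a path system crossing `X`: edge-disjoint walks outside `X` that continue each dart
leaving `X` to `t`. -/
structure IsTailSystem (t : V) (X : Set V) (T : G.outDarts X → List G.Dart) : Prop where
  isDartWalk : ∀ d, IsDartWalk d.1.tgt (T d) t
  outside : ∀ d ∈ dartSet T, d.src ∉ X ∧ d.tgt ∉ X
  disjoint : EdgeDisjointFamily T

variable {X : Set V} {Ps Qs : Set G.Path}

theorem EdgeDisjoint.eq_of_mem_darts (h : G.EdgeDisjoint Ps) {P Q : G.Path} (hP : P ∈ Ps)
    (hQ : Q ∈ Ps) {d d' : G.Dart} (hd : d ∈ P.darts) (hd' : d' ∈ Q.darts)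
    (he : d.edge = d'.edge) : P = Q :=
  h.eq hP hQ fun hdisj => hdisj d.edge (Path.edge_mem_edges hd) (he ▸ Path.edge_mem_edges hd')

theorem Path.nodup_map_edge_of_sublist {P : G.Path} {l : List G.Dart} (h : l.Sublist P.darts) :
    (l.map Dart.edge).Nodup :=
  P.nodup_edges.sublist (P.map_edge_darts ▸ h.map _)

theorem IsStLinkage.exists_isHeadSystem (hQs : G.IsStLinkage s t Qs) (hsX : s ∈ X) (htX : t ∉ X) :
    ∃ (H : Qs → List G.Dart) (x : Qs → G.outDarts X), IsHeadSystem s X H x ∧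
      ∀ Q, (x Q).1 ∈ Q.1.darts := by
  obtain ⟨hdisj, hpath, hcover⟩ := hQs
  have hsplit := fun Q : Qs => (hpath Q Q.2).isDartWalk_darts.exists_first_exit hsX htX
  choose H x hx B hQ hH using hsplit
  have hsub : ∀ Q : Qs, (H Q).Sublist Q.1.darts := fun Q => hQ Q ▸ List.sublist_append_left _ _
  have hxQ : ∀ Q : Qs, x Q ∈ Q.1.darts := fun Q => by simp [hQ Q]
  refine ⟨H, fun Q => ⟨x Q, hx Q⟩, ⟨fun Q => ?_, ?_, ?_, ⟨fun Q => ?_, ?_⟩, fun Q Q' h => ?_, ?_⟩,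
    hxQ⟩
  · exact (isDartWalk_append_cons.1 (hQ Q ▸ (hpath Q Q.2).isDartWalk_darts)).1
  · rintro d ⟨Q, hd⟩
    exact hH Q d hd
  · rintro d ⟨Q, hd⟩ rfl
    exact Q.1.tgt_ne_first ((hsub Q).subset hd) (hpath Q Q.2).1.symm
  · exact Path.nodup_map_edge_of_sublist (hsub Q)
  · exact fun {Q Q'} _ _ hd hd' he => Subtype.ext <|
      hdisj.eq_of_mem_darts Q.2 Q'.2 ((hsub Q).subset hd) ((hsub Q').subset hd') he
  · exact Subtype.ext <| hdisj.eq_of_mem_darts Q.2 Q'.2 (hxQ Q) (hxQ Q')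
      (congrArg (fun d => d.1.edge) h)
  · intro d hd
    obtain ⟨Q, hQs, hdQ⟩ := hcover d.edge (edge_mem_edgeCut (mem_outDarts_singleton.2 hd))
    have hfirst : Q.first = s := (hpath Q hQs).1
    have hmem : d ∈ Q.darts := Path.mem_darts_of_src_eq_first hdQ (hd.trans hfirst.symm)
    rcases List.mem_append.1 (hQ ⟨Q, hQs⟩ ▸ hmem) with hdH | hdxB
    · exact Or.inl ⟨⟨Q, hQs⟩, hdH⟩
    · refine Or.inr ⟨⟨Q, hQs⟩, (List.mem_cons.1 hdxB).resolve_right fun hdB => ?_⟩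
      exact Path.src_ne_first_of_darts_eq (hQ ⟨Q, hQs⟩) hdB (hd.trans hfirst.symm)

theorem Orthogonal.exists_split (h : G.Orthogonal (G.edgeCut X) Ps)
    (hPs : ∀ P ∈ Ps, G.IsABPath {s} {t} P) (hsX : s ∈ X) (htX : t ∉ X) {d : G.Dart}
    (hd : d ∈ G.outDarts X) :
    ∃ P ∈ Ps, ∃ A B, P.darts = A ++ d :: B ∧ (∀ y ∈ A, y.src ∈ X ∧ y.tgt ∈ X) ∧
      ∀ y ∈ B, y.src ∉ X ∧ y.tgt ∉ X := by
  obtain ⟨P, hP, hdP⟩ := h.2 d.edge (edge_mem_edgeCut hd)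
  obtain ⟨A, d', hd', B, hAB, hA⟩ := (hPs P hP).isDartWalk_darts.exists_first_exit hsX htX
  have unique : ∀ y ∈ P.darts, y.edge ∈ G.edgeCut X → y.edge = d.edge := fun y hy hyX =>
    (h.1 P hP).unique ⟨hyX, Path.edge_mem_edges hy⟩ ⟨edge_mem_edgeCut hd, hdP⟩
  obtain rfl : d' = d := eq_of_edge_eq_of_mem_outDarts hd' hd
    (unique d' (by simp [hAB]) (edge_mem_edgeCut hd'))
  have hBP : ∀ y ∈ B, y ∈ P.darts := fun y hy => by simp [hAB, hy]
  have hBX : ∀ y ∈ B, y.edge ∉ G.edgeCut X := by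
    intro y hy hyX
    have hn : ((d' :: B).map Dart.edge).Nodup :=
      Path.nodup_map_edge_of_sublist (hAB ▸ List.sublist_append_right A _)
    exact (List.nodup_cons.1 hn).1 (unique y (hBP y hy) hyX ▸ List.mem_map_of_mem hy)
  have hnotin : ∀ y ∈ B, y.src ∉ X → y.tgt ∉ X := fun y hy hys hyt =>
    hBX y hy (edge_mem_edgeCut (d := y.symm) ⟨hyt, hys⟩)
  have hsrc : ∀ y ∈ B, y.src ∉ X :=
    (isDartWalk_append_cons.1 (hAB ▸ (hPs P hP).isDartWalk_darts)).2.forall_src_mem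
      (S := Xᶜ) hd.2 hnotin
  exact ⟨P, hP, A, B, hAB, hA, fun y hy => ⟨hsrc y hy, hnotin y hy (hsrc y hy)⟩⟩

theorem Orthogonal.exists_isTailSystem (h : G.Orthogonal (G.edgeCut X) Ps)
    (hdisj : G.EdgeDisjoint Ps) (hPs : ∀ P ∈ Ps, G.IsABPath {s} {t} P) (hsX : s ∈ X)
    (htX : t ∉ X) : ∃ T : G.outDarts X → List G.Dart, IsTailSystem t X T := by
  choose P hP A T hAT _ hT using fun d : G.outDarts X => h.exists_split hPs hsX htX d.2
  have hsub : ∀ d, (d.1 :: T d).Sublist (P d).darts := fun d =>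
    hAT d ▸ List.sublist_append_right _ _
  have hsubT : ∀ d, (T d).Sublist (P d).darts := fun d =>
    (List.sublist_cons_self _ _).trans (hsub d)
  have hPd : ∀ d : G.outDarts X, d.1.edge ∈ (P d).edges := fun d =>
    Path.edge_mem_edges ((hsub d).subset List.mem_cons_self)
  refine ⟨T, fun d => ?_, ?_, fun d => ?_, fun {d d'} _ _ hy hy' he => ?_⟩
  · exact (isDartWalk_append_cons.1 (hAT d ▸ (hPs _ (hP d)).isDartWalk_darts)).2
  · rintro y ⟨d, hy⟩
    exact hT d y hy
  · exact Path.nodup_map_edge_of_sublist (hsubT d)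
  · have hPP : P d = P d' :=
      hdisj.eq_of_mem_darts (hP d) (hP d') ((hsubT d).subset hy) ((hsubT d').subset hy') he
    exact Subtype.ext <| eq_of_edge_eq_of_mem_outDarts d.2 d'.2 <| (h.1 _ (hP d)).unique
      ⟨edge_mem_edgeCut d.2, hPd d⟩ ⟨edge_mem_edgeCut d'.2, hPP ▸ hPd d'⟩

/-- The trails obtained by following a head, then its exit dart, then the tail of that dart. -/
def splice (H : ι → List G.Dart) (x : ι → G.outDarts X) (T : G.outDarts X → List G.Dart) (i : ι) :
    List G.Dart :=
  H i ++ (x i).1 :: T (x i)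

variable {H : ι → List G.Dart} {x : ι → G.outDarts X} {T : G.outDarts X → List G.Dart}

theorem IsTailSystem.mem_head_of_tgt_mem (hT : IsTailSystem t X T) {i : ι} {d : G.Dart}
    (hd : d ∈ splice H x T i) (ht : d.tgt ∈ X) : d ∈ H i := by
  rcases List.mem_append.1 hd with hd | hd
  · exact hd
  · rcases List.mem_cons.1 hd with rfl | hd
    exacts [absurd ht (x i).2.2, absurd ht (hT.outside d ⟨x i, hd⟩).2]

namespace IsHeadSystem

theorem mem_tail_of_src_notMem (hH : IsHeadSystem s X H x) {i : ι} {d : G.Dart}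
    (hd : d ∈ splice H x T i) (hs : d.src ∉ X) : d ∈ T (x i) := by
  rcases List.mem_append.1 hd with hd | hd
  · exact absurd (hH.inside d ⟨i, hd⟩).1 hs
  · exact (List.mem_cons.1 hd).resolve_left fun h => hs (h ▸ (x i).2.1)

theorem eq_exit_of_mem_outDarts (hH : IsHeadSystem s X H x) (hT : IsTailSystem t X T) {i : ι}
    {d : G.Dart} (hd : d ∈ splice H x T i) (hdX : d ∈ G.outDarts X) : d = x i := by
  rcases List.mem_append.1 hd with hd | hd
  · exact absurd (hH.inside d ⟨i, hd⟩).2 hdX.2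
  · exact (List.mem_cons.1 hd).resolve_right fun hd => (hT.outside d ⟨x i, hd⟩).1 hdX.1

theorem nodup_splice (hH : IsHeadSystem s X H x) (hT : IsTailSystem t X T) (i : ι) :
    ((splice H x T i).map Dart.edge).Nodup := by
  rw [splice, List.map_append, List.map_cons]
  refine (hH.disjoint.nodup i).append (List.nodup_cons.2 ⟨fun hmem => ?_, hT.disjoint.nodup _⟩)
    fun g hg hg' => ?_
  · obtain ⟨d, hd, he⟩ := List.mem_map.1 hmem
    exact (Dart.ends_mem_of_edge_eq (S := Xᶜ) he (hT.outside d ⟨_, hd⟩)).1 (x i).2.1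
  · obtain ⟨d, hd, rfl⟩ := List.mem_map.1 hg
    rw [← List.map_cons] at hg'
    obtain ⟨d', hd', he⟩ := List.mem_map.1 hg'
    have hin := Dart.ends_mem_of_edge_eq he.symm (hH.inside d ⟨i, hd⟩)
    rcases List.mem_cons.1 hd' with rfl | hd'
    exacts [(x i).2.2 hin.2, (hT.outside d' ⟨_, hd'⟩).1 hin.1]

theorem edgeDisjointFamily_splice (hH : IsHeadSystem s X H x) (hT : IsTailSystem t X T) :
    EdgeDisjointFamily (splice H x T) where
  nodup := hH.nodup_splice hT
  eq_of_edge_eq {i j d d'} hd hd' he := by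
    by_cases htgt : d.tgt ∈ X
    · have hdH := hT.mem_head_of_tgt_mem hd htgt
      have hd'X := Dart.ends_mem_of_edge_eq he (hH.inside d ⟨i, hdH⟩)
      exact hH.disjoint.eq_of_edge_eq hdH (hT.mem_head_of_tgt_mem hd' hd'X.2) he
    · by_cases hsrc : d.src ∈ X
      · rcases Dart.eq_or_eq_symm_of_edge_eq he with rfl | rfl
        · exact hH.injective <| Subtype.ext <|
            (hH.eq_exit_of_mem_outDarts hT hd ⟨hsrc, htgt⟩).symm.trans
              (hH.eq_exit_of_mem_outDarts hT hd' ⟨hsrc, htgt⟩)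
        · exact absurd (hH.inside d' ⟨j, hT.mem_head_of_tgt_mem hd' hsrc⟩).1 htgt
      · have hd'X := Dart.ends_mem_of_edge_eq (S := Xᶜ) he ⟨hsrc, htgt⟩
        exact hH.injective <| hT.disjoint.eq_of_edge_eq (hH.mem_tail_of_src_notMem hd hsrc)
          (hH.mem_tail_of_src_notMem hd' hd'X.1) he

theorem isTrailLinkage_splice (hH : IsHeadSystem s X H x) (hT : IsTailSystem t X T) (hsX : s ∈ X) :
    IsTrailLinkage s (fun _ => t) (splice H x T) where
  isDartWalk i := isDartWalk_append_cons.2 ⟨hH.isDartWalk i, hT.isDartWalk (x i)⟩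
  tgt_ne := by
    rintro d ⟨i, hd⟩ rfl
    exact hH.tgt_ne d ⟨i, hT.mem_head_of_tgt_mem hd hsX⟩ rfl
  disjoint := hH.edgeDisjointFamily_splice hT
  cover d hd := by
    rcases hH.cover d hd with ⟨i, hdi⟩ | ⟨i, rfl⟩
    exacts [⟨i, List.mem_append_left _ hdi⟩, ⟨i, by simp [splice]⟩]

theorem outDarts_subset_dartSet_splice (hH : IsHeadSystem s X H x) (hT : IsTailSystem t X T)
    (hsX : s ∈ X) (i : ι) {R : Set V}
    (hR : ∀ d ∈ residual s (splice H x T) (x i).1.edge, d.src ∈ R → d.tgt ∈ R) (htR : t ∉ R) :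
    G.outDarts (X ∩ insert s R) ⊆ dartSet (splice H x T) := by
  have hsY : s ∈ X ∩ insert s R := ⟨hsX, Set.mem_insert s R⟩
  intro d hd
  by_contra hdW
  have hsrc : d.src ∈ R := hd.1.2.resolve_left fun hds =>
    hdW ((hH.isTrailLinkage_splice hT hsX).cover d hds)
  have hde : d.edge ≠ (x i).1.edge := fun he => by
    rcases Dart.eq_or_eq_symm_of_edge_eq he with rfl | rfl
    exacts [hdW ⟨i, by simp [splice]⟩, (x i).2.2 hd.1.1]
  have htgt : d.tgt ∈ R := hR d ⟨fun h => hd.2 (h ▸ hsY), hde, hdW⟩ hsrc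
  have hdX : d ∈ G.outDarts X := ⟨hd.1.1, fun h => hd.2 ⟨h, Or.inr htgt⟩⟩
  -- The tail of `d` belongs to no trail, so it leads from `d.tgt ∈ R` to `t` inside the residual.
  refine htR ((hT.isDartWalk ⟨d, hdX⟩).last_mem htgt fun y hy => hR y ?_)
  have hyX := hT.outside y ⟨_, hy⟩
  refine ⟨fun h => hyX.2 (h ▸ hsX), fun he => ?_, fun ⟨j, hj⟩ => ?_⟩
  · exact (Dart.ends_mem_of_edge_eq (S := Xᶜ) he hyX).1 (x i).2.1
  · have hdx : ⟨d, hdX⟩ = x j :=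
      hT.disjoint.eq_of_edge_eq hy (hH.mem_tail_of_src_notMem hj hyX.1) rfl
    exact hdW ⟨j, by simp [splice, ← hdx]⟩

theorem symm_notMem_outDarts_of_mem_splice (hH : IsHeadSystem s X H x) (hT : IsTailSystem t X T)
    (hsX : s ∈ X) (i : ι) {R : Set V}
    (hR : ∀ d ∈ residual s (splice H x T) (x i).1.edge, d.src ∈ R → d.tgt ∈ R)
    {d : G.Dart} (hd : d ∈ dartSet (splice H x T)) : d.symm ∉ G.outDarts (X ∩ insert s R) := by
  rintro ⟨⟨htX, htR⟩, hsrc⟩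
  have hlink := hH.isTrailLinkage_splice hT hsX
  obtain ⟨j, hj⟩ := hd
  have hin := hH.inside d ⟨j, hT.mem_head_of_tgt_mem hj htX⟩
  refine hsrc ⟨hin.1, Or.inr (hR d.symm ⟨?_, fun he => ?_, ?_⟩ ?_)⟩
  · exact fun h => hsrc ⟨hin.1, Or.inl h⟩
  · exact (x i).2.2 (Dart.ends_mem_of_edge_eq he hin.symm).2
  · exact hlink.disjoint.symm_notMem ⟨j, hj⟩
  · exact htR.resolve_left (hlink.tgt_ne d ⟨j, hj⟩)

theorem exists_isEMABCut (hH : IsHeadSystem s X H x) (hT : IsTailSystem t X T) (hsX : s ∈ X)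
    (htX : t ∉ X) (i : ι) (hi : (x i).1.edge ∉ G.edgeCut {s})
    (huses : ∀ Ps, G.IsStLinkage s t Ps → ∃ P ∈ Ps, (x i).1.edge ∈ P.edges) :
    ∃ Y ⊆ X, s ∈ Y ∧ G.IsEMABCut {s} {t} (G.edgeCut Y) ∧ (x i).1 ∈ G.outDarts Y ∧
      G.outDarts Y ⊆ dartSet (splice H x T) := by
  have hlink := hH.isTrailLinkage_splice hT hsX
  have hsrc : (x i).1.src ≠ s := fun h => hi (edge_mem_edgeCut (mem_outDarts_singleton.2 h))
  set R := reach (residual s (splice H x T) (x i).1.edge) (x i).1.src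
  have htR : t ∉ R :=
    hlink.target_notMem_reach_residual (fun h => htX (h ▸ hsX)) rfl hsrc huses
  have hR : ∀ d ∈ residual s (splice H x T) (x i).1.edge, d.src ∈ R → d.tgt ∈ R :=
    fun d hd => tgt_mem_reach hd
  have hout := hH.outDarts_subset_dartSet_splice hT hsX i hR htR
  have hsY : s ∈ X ∩ insert s R := ⟨hsX, Set.mem_insert s R⟩
  refine ⟨X ∩ insert s R, Set.inter_subset_left, hsY, ?_, ?_, hout⟩
  · exact hlink.isEMABCut_edgeCut hsY (fun h => htX h.1)
      (fun d hd => hH.symm_notMem_outDarts_of_mem_splice hT hsX i hR hd) hout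
  · exact ⟨⟨(x i).2.1, Or.inr (mem_reach_self _ _)⟩, fun h => (x i).2.2 h.1⟩

theorem exists_exit_edge_eq (hH : IsHeadSystem s X H x) (hT : IsTailSystem t X T) (hsX : s ∈ X)
    (htX : t ∉ X) {e : E} (he : e ∈ G.edgeCut X)
    (huses : ∀ Ps, G.IsStLinkage s t Ps → ∃ P ∈ Ps, e ∈ P.edges) : ∃ i, (x i).1.edge = e := by
  obtain ⟨d, ⟨i, hd⟩, hde⟩ := (hH.isTrailLinkage_splice hT hsX).exists_mem_dartSet_edge_eq
    (fun h => htX (h ▸ hsX)) huses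
  obtain ⟨d', hd', rfl⟩ := mem_edgeCut_iff.1 he
  rcases Dart.eq_or_eq_symm_of_edge_eq hde with rfl | rfl
  · exact ⟨i, congrArg Dart.edge (hH.eq_exit_of_mem_outDarts hT hd hd').symm⟩
  · exact absurd (hH.inside _ ⟨i, hT.mem_head_of_tgt_mem hd hd'.1⟩).1 hd'.2

end IsHeadSystem

theorem ABCutLE.src_mem_of_mem_outDarts {Y : Set V}
    (hle : G.ABCutLE {s} {t} (G.edgeCut X) (G.edgeCut Y)) (h : G.Orthogonal (G.edgeCut X) Ps)
    (hPs : ∀ P ∈ Ps, G.IsABPath {s} {t} P) (hsX : s ∈ X) (htX : t ∉ X) (hsY : s ∈ Y)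
    {d : G.Dart} (hd : d ∈ G.outDarts X) : d.src ∈ Y := by
  by_contra hdY
  obtain ⟨P, hP, A, B, hAB, hA, -⟩ := h.exists_split hPs hsX htX hd
  have hwA : IsDartWalk s A d.src :=
    (isDartWalk_append_cons.1 (hAB ▸ (hPs P hP).isDartWalk_darts)).1
  obtain ⟨A₁, d', hd', A₂, rfl, -⟩ := hwA.exists_first_exit hsY hdY
  obtain ⟨c, hcX, hc⟩ := hle.exists_mem_prefix (hPs P hP) (l₁ := A₁.map Dart.edge)
    (l₂ := (A₂ ++ d :: B).map Dart.edge) (by simp [← P.map_edge_darts, hAB])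
    (edge_mem_edgeCut hd')
  obtain ⟨y, hy, rfl⟩ : ∃ y ∈ A₁ ++ [d'], y.edge = c := List.mem_map.1 (by simpa using hc)
  have hyA : y ∈ A₁ ++ d' :: A₂ := by
    rw [← List.singleton_append, ← List.append_assoc]
    exact List.mem_append_left A₂ hy
  exact edge_notMem_edgeCut (hA y hyA) hcX

theorem EdgeDisjoint.orthogonal_of_exits (hdisj : G.EdgeDisjoint Qs) {x : Qs → G.outDarts X}
    (hx : ∀ Q, (x Q).1 ∈ Q.1.darts) (hsurj : Surjective x) :
    G.Orthogonal (G.edgeCut X) Qs := by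
  refine ⟨fun Q hQ => ⟨(x ⟨Q, hQ⟩).1.edge, ⟨edge_mem_edgeCut (x _).2, Path.edge_mem_edges (hx _)⟩,
    fun g hg => ?_⟩, fun g hg => ?_⟩
  · obtain ⟨hgX, hgQ⟩ := hg
    obtain ⟨d, hd, rfl⟩ := mem_edgeCut_iff.1 hgX
    obtain ⟨Q', hQ'⟩ := hsurj ⟨d, hd⟩
    obtain ⟨d', hd', he⟩ := Path.exists_dart_of_mem_edges hgQ
    obtain rfl : Q' = ⟨Q, hQ⟩ := Subtype.ext <|
      hdisj.eq_of_mem_darts Q'.2 hQ (hx Q') hd' (by rw [hQ', he])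
    rw [hQ']
  · obtain ⟨d, hd, rfl⟩ := mem_edgeCut_iff.1 hg
    obtain ⟨Q, hQ⟩ := hsurj ⟨d, hd⟩
    exact ⟨Q, Q.2, Path.edge_mem_edges (by simpa [hQ] using hx Q)⟩

end Grapht

/-- **Tight cut lemma.** If `s` is linked, every linkage of `s` uses the edge
`e ∉ δ(s)`, and `C` is the `⊴`-smallest Erdős–Menger `st`-cut containing `e`, then `C`
is tight: every linkage of `s` is orthogonal to `C`. -/
theorem tight_cut {V : Type u} {E : Type v} (G : Grapht V E) (s t : V) (hst : s ≠ t)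
    (hT : G.T = {s, t}) (hs : G.StLinked s t) (e : E) (he : e ∉ G.edgeCut {s})
    (huses : ∀ Ps : Set G.Path, G.IsStLinkage s t Ps → ∃ P ∈ Ps, e ∈ P.edges)
    (C : Set E) (hC : G.IsEMABCut {s} {t} C) (heC : e ∈ C)
    (hmin : ∀ C' : Set E, G.IsEMABCut {s} {t} C' → e ∈ C' → G.ABCutLE {s} {t} C C')
    (Qs : Set G.Path) (hQs : G.IsStLinkage s t Qs) :
    G.Orthogonal C Qs := by
  obtain ⟨X, hsX, htX, rfl⟩ := hC.exists_edgeCut_eq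
  obtain ⟨-, Ps, hdisj, hPs, horth⟩ := hC
  obtain ⟨H, x, hH, hx⟩ := hQs.exists_isHeadSystem hsX htX
  obtain ⟨T, hT⟩ := horth.exists_isTailSystem hdisj hPs hsX htX
  obtain ⟨i, rfl⟩ := hH.exists_exit_edge_eq hT hsX htX heC huses
  obtain ⟨Y, hYX, hsY, hY, hiY, hYW⟩ := hH.exists_isEMABCut hT hsX htX i he huses
  have hle := hmin _ hY (Grapht.edge_mem_edgeCut hiY)
  refine hQs.1.orthogonal_of_exits hx fun d => ?_
  have hdY : d.1 ∈ G.outDarts Y :=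
    ⟨hle.src_mem_of_mem_outDarts horth hPs hsX htX hsY d.2, fun h => d.2.2 (hYX h)⟩
  obtain ⟨Q, hQ⟩ := hYW hdY
  exact ⟨Q, Subtype.ext (hH.eq_exit_of_mem_outDarts hT hQ d.2).symm⟩
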